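/- Let k₀ ⊆ k be fields and (G_n, s_n)_{n ∈ ℕ} a complete system of finite groups. Suppose there exists an increasing tower (F_n)_{n ∈ ℕ} of intermediate fields of k₀((t))/k₀(t), each finite Galois over k₀(t), with isomorphisms G_n ≅ Gal(F_n/k₀(t)) compatible with the s_n and the restriction maps. Then the composita L_n = F_n·k, taken inside k((t)) (using the inclusion k₀((t)) ⊆ k((t))), form an increasing tower of intermediate fields of k((t))/k(t), each finite Galois over k(t), with isomorphisms G_n ≅ Gal(L_n/k(t)) compatible with the s_n and the restriction maps. -/

import Mathlib

attribute [-instance] HahnSeries.powerSeriesAlgebra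

set_option synthInstance.maxHeartbeats 400000
set_option maxHeartbeats 1000000

/-- The canonical copy of the rational function field `k(t)` inside the field `k((t))` of
formal Laurent series: the intermediate field of `k((t))/k` generated by `t`.  (This is the
image of the canonical embedding `k(t) ↪ k((t))`.) -/
noncomputable def ratFuncField (k : Type*) [Field k] : IntermediateField k (LaurentSeries k) :=
  IntermediateField.adjoin k {(HahnSeries.single (1 : ℤ) (1 : k) : LaurentSeries k)}

/-- The canonical inclusion `k₀((t)) ⊆ k((t))` induced by `k₀ ⊆ k`, applying the inclusion
`k₀ → k` to each coefficient. -/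
noncomputable def laurentInclusion (k₀ k : Type*) [Field k₀] [Field k] [Algebra k₀ k] :
    LaurentSeries k₀ →+* LaurentSeries k where
  toFun x := x.map (algebraMap k₀ k)
  map_one' := HahnSeries.map_one (algebraMap k₀ k).toMonoidWithZeroHom
  map_mul' x y := HahnSeries.map_mul (algebraMap k₀ k).toNonUnitalRingHom
  map_zero' := by ext g; simp
  map_add' x y := HahnSeries.map_add (algebraMap k₀ k).toAddMonoidHom


open IntermediateField in
theorem aux_galois (K₀ F K E : Type*) [Field K₀] [Field F] [Field K] [Field E]
    [Algebra K₀ F] [Algebra K₀ K] [Algebra K₀ E] [Algebra K E] [Algebra F E]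
    [IsScalarTower K₀ F E] [IsScalarTower K₀ K E] [IsGalois K₀ F] [FiniteDimensional K₀ F]
    (L : IntermediateField K E)
    (hL : L = adjoin K (Set.range (algebraMap F E))) :
    IsGalois K L ∧ FiniteDimensional K L := by
  obtain ⟨p, hp, hs⟩ := IsGalois.is_separable_splitting_field K₀ F
  have hspl : ((p.map (algebraMap K₀ K)).map (algebraMap K E)).Splits := by
    rw [Polynomial.map_map, ← IsScalarTower.algebraMap_eq]
    exact Polynomial.Splits.of_algHom hs.1 (IsScalarTower.toAlgHom K₀ F E)
  have hroot : (p.map (algebraMap K₀ K)).rootSet E = algebraMap F E '' (p.rootSet F) := by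
    have : (p.map (algebraMap K₀ K)).rootSet E = p.rootSet E := by
      simp [Set.ext_iff, Polynomial.mem_rootSet']
    rw [this]
    exact (hs.1.image_rootSet (IsScalarTower.toAlgHom K₀ F E)).symm
  have hL' : L = adjoin K ((p.map (algebraMap K₀ K)).rootSet E) := by
    rw [hL, hroot]
    apply le_antisymm
    · rw [adjoin_le_iff]
      rintro _ ⟨x, rfl⟩
      have hx : x ∈ Algebra.adjoin K₀ (p.rootSet F) := by rw [hs.2]; trivial
      induction hx using Algebra.adjoin_induction with
      | mem x hx => exact subset_adjoin _ _ ⟨x, hx, rfl⟩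
      | algebraMap r =>
        rw [← IsScalarTower.algebraMap_apply, IsScalarTower.algebraMap_apply K₀ K E]
        exact IntermediateField.algebraMap_mem _ _
      | add x y _ _ hx hy => rw [map_add]; exact add_mem hx hy
      | mul x y _ _ hx hy => rw [map_mul]; exact mul_mem hx hy
    · exact adjoin.mono _ _ _ (Set.image_subset_range _ _)
  have := adjoin_rootSet_isSplittingField hspl
  rw [← hL'] at this
  exact ⟨IsGalois.of_separable_splitting_field (p := p.map (algebraMap K₀ K)) hp.map,
    Polynomial.IsSplittingField.finiteDimensional L (p.map (algebraMap K₀ K))⟩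

open IntermediateField in
theorem aux_iso (K₀ F K E : Type*) [Field K₀] [Field F] [Field K] [Field E]
    [Algebra K₀ F] [Algebra K₀ K] [Algebra K₀ E] [Algebra K E] [Algebra F E]
    [IsScalarTower K₀ F E] [IsScalarTower K₀ K E] [IsGalois K₀ F] [FiniteDimensional K₀ F]
    (hli : ∀ (m : ℕ) (v : Fin m → F), LinearIndependent K₀ v →
      LinearIndependent K (fun i => algebraMap F E (v i)))
    (L : IntermediateField K E)
    (hL : L = adjoin K (Set.range (algebraMap F E))) :
    ∃ e : (L ≃ₐ[K] L) ≃* (F ≃ₐ[K₀] F), ∀ (σ : L ≃ₐ[K] L) (x : F) (hx : algebraMap F E x ∈ L),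
      algebraMap F E (e σ x) = (σ ⟨algebraMap F E x, hx⟩ : L) := by
  obtain ⟨hg, hf⟩ := aux_galois K₀ F K E L hL
  have hmem : ∀ x, algebraMap F E x ∈ L := fun x => hL ▸ subset_adjoin _ _ ⟨x, rfl⟩
  let i : F →+* L := (algebraMap F E).codRestrict L.toSubfield hmem
  let : Algebra F L := i.toAlgebra
  have hi : ∀ x : F, ((algebraMap F L x : L) : E) = algebraMap F E x := fun x => rfl
  have : IsScalarTower K₀ F L := IsScalarTower.of_algebraMap_eq fun x => by
    apply Subtype.ext
    rw [hi, ← IsScalarTower.algebraMap_apply]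
    rfl
  let r : (L ≃ₐ[K] L) →* (F ≃ₐ[K₀] F) :=
    (AlgEquiv.restrictNormalHom F).comp (AlgEquiv.restrictScalarsHom K₀)
  have hr : ∀ (σ : L ≃ₐ[K] L) (x : F), algebraMap F E (r σ x) = (σ (algebraMap F L x) : L) := by
    intro σ x
    rw [← hi]
    congr 1
    exact AlgEquiv.restrictNormal_commutes (AlgEquiv.restrictScalars K₀ σ) F x
  have hinj : Function.Injective r := by
    intro σ τ h
    have key : L.val.comp σ.toAlgHom = L.val.comp τ.toAlgHom := by
      apply algHom_ext_of_eq_adjoin _ hL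
      rintro _ ⟨x, rfl⟩
      change ((σ (algebraMap F L x) : L) : E) = (τ (algebraMap F L x) : L)
      rw [← hr, ← hr, h]
    ext x
    exact congrArg (fun f => f x) key
  have hcard : Nat.card (F ≃ₐ[K₀] F) ≤ Nat.card (L ≃ₐ[K] L) := by
    rw [IsGalois.card_aut_eq_finrank, IsGalois.card_aut_eq_finrank]
    have h1 := hli _ _ (Module.finBasis K₀ F).linearIndependent
    have h2 : LinearIndependent K (fun j => algebraMap F L (Module.finBasis K₀ F j)) :=
      LinearIndependent.of_comp L.val.toLinearMap h1
    simpa using h2.fintype_card_le_finrank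
  have hb : Function.Bijective r :=
    (Nat.bijective_iff_injective_and_card r).2
      ⟨hinj, le_antisymm (Nat.card_le_card_of_injective r hinj) hcard⟩
  exact ⟨MulEquiv.ofBijective r hb, fun σ x hx => hr σ x⟩

/-- coordinate map -/
noncomputable def lcoord (k₀ k : Type*) [Field k₀] [Field k] [Algebra k₀ k] (c : k →ₗ[k₀] k₀) :
    LaurentSeries k →+ LaurentSeries k₀ where
  toFun x := x.map c
  map_zero' := by ext g; simp
  map_add' x y := by ext g; simp

theorem lcoord_coeff (k₀ k : Type*) [Field k₀] [Field k] [Algebra k₀ k] (c : k →ₗ[k₀] k₀)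
    (x : LaurentSeries k) (n : ℤ) : (lcoord k₀ k c x).coeff n = c (x.coeff n) := rfl

theorem laurentInclusion_coeff (k₀ k : Type*) [Field k₀] [Field k] [Algebra k₀ k]
    (x : LaurentSeries k₀) (n : ℤ) :
    (laurentInclusion k₀ k x).coeff n = algebraMap k₀ k (x.coeff n) := rfl

theorem lcoord_mul (k₀ k : Type*) [Field k₀] [Field k] [Algebra k₀ k] (c : k →ₗ[k₀] k₀)
    (x : LaurentSeries k) (f : LaurentSeries k₀) :
    lcoord k₀ k c (x * laurentInclusion k₀ k f) = lcoord k₀ k c x * f := by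
  ext n
  rw [lcoord_coeff]
  have h1 : (laurentInclusion k₀ k f).support ⊆ f.support := by
    intro m hm hf
    exact hm (by rw [laurentInclusion_coeff, hf, map_zero])
  have h2 : (lcoord k₀ k c x).support ⊆ x.support := by
    intro m hm hf
    exact hm (by rw [lcoord_coeff, hf, map_zero])
  rw [HahnSeries.coeff_mul_right' f.isPWO_support h1, HahnSeries.coeff_mul_left' x.isPWO_support h2,
    map_sum]
  refine Finset.sum_congr rfl fun ij _ => ?_
  rw [laurentInclusion_coeff, lcoord_coeff, mul_comm, ← Algebra.smul_def, map_smul, smul_eq_mul,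
    mul_comm]

theorem single_mem (k : Type*) [Field k] (n : ℕ) (a : k) :
    (HahnSeries.single (n : ℤ) a : LaurentSeries k) ∈ ratFuncField k := by
  have h : (HahnSeries.single (n : ℤ) a : LaurentSeries k)
      = a • (HahnSeries.single (1 : ℤ) (1 : k) : LaurentSeries k) ^ n := by
    rw [HahnSeries.single_pow]
    ext m
    by_cases hm : m = n
    · subst hm; simp
    · simp [HahnSeries.coeff_single_of_ne, hm]
  rw [h]
  exact (ratFuncField k).smul_mem
    (pow_mem (IntermediateField.mem_adjoin_simple_self k _) n)

theorem lcoord_mem (k₀ k : Type*) [Field k₀] [Field k] [Algebra k₀ k] (c : k →ₗ[k₀] k₀)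
    (p : Polynomial k) :
    lcoord k₀ k c (Polynomial.aeval (HahnSeries.single (1 : ℤ) (1 : k) : LaurentSeries k) p)
      ∈ ratFuncField k₀ := by
  induction p using Polynomial.induction_on' with
  | add p q hp hq => rw [map_add, map_add]; exact add_mem hp hq
  | monomial n a =>
    have h : lcoord k₀ k c (Polynomial.aeval (HahnSeries.single (1 : ℤ) (1 : k) : LaurentSeries k)
        (Polynomial.monomial n a)) = HahnSeries.single (n : ℤ) (c a) := by
      rw [Polynomial.aeval_monomial, HahnSeries.single_pow, ← Algebra.smul_def]
      ext m
      rw [lcoord_coeff]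
      by_cases hm : m = n
      · subst hm; simp
      · simp [HahnSeries.coeff_single_of_ne, hm]
    rw [h]; exact single_mem k₀ n _

theorem exists_den (k : Type*) [Field k] (s : Finset ℕ) (a : ℕ → ratFuncField k) :
    ∃ d : LaurentSeries k, d ≠ 0 ∧ ∀ i ∈ s, ∃ q : Polynomial k, (a i : LaurentSeries k) * d =
      Polynomial.aeval (HahnSeries.single (1 : ℤ) (1 : k) : LaurentSeries k) q := by
  suffices ∃ d : Polynomial k,
      Polynomial.aeval (HahnSeries.single (1 : ℤ) (1 : k) : LaurentSeries k) d ≠ 0 ∧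
      ∀ i ∈ s, ∃ q : Polynomial k, (a i : LaurentSeries k) *
        Polynomial.aeval (HahnSeries.single (1 : ℤ) (1 : k) : LaurentSeries k) d =
      Polynomial.aeval (HahnSeries.single (1 : ℤ) (1 : k) : LaurentSeries k) q by
    obtain ⟨d, hd, h⟩ := this
    exact ⟨_, hd, h⟩
  induction s using Finset.induction_on with
  | empty => exact ⟨1, by simp⟩
  | insert j s hj ih =>
    obtain ⟨d, hd, h⟩ := ih
    obtain ⟨r, t, hrt⟩ := (IntermediateField.mem_adjoin_simple_iff k _).1 (a j).2
    by_cases ht : Polynomial.aeval (HahnSeries.single (1 : ℤ) (1 : k) : LaurentSeries k) t = 0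
    · refine ⟨d, hd, fun i hi => ?_⟩
      rcases Finset.mem_insert.1 hi with rfl | hi
      · exact ⟨0, by rw [hrt, ht]; simp⟩
      · exact h i hi
    · refine ⟨d * t, by rw [map_mul]; exact mul_ne_zero hd ht, fun i hi => ?_⟩
      rcases Finset.mem_insert.1 hi with rfl | hi
      · exact ⟨r * d, by rw [hrt, map_mul, map_mul]; field_simp⟩
      · obtain ⟨q, hq⟩ := h i hi
        exact ⟨q * t, by rw [map_mul, map_mul, ← hq, mul_assoc]⟩

theorem li_inclusion (k₀ k : Type*) [Field k₀] [Field k] [Algebra k₀ k] (m : ℕ)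
    (v : Fin m → LaurentSeries k₀) (hv : LinearIndependent (ratFuncField k₀) v) :
    LinearIndependent (ratFuncField k) (fun i => laurentInclusion k₀ k (v i)) := by
  rw [Fintype.linearIndependent_iff] at hv ⊢
  intro a ha i
  obtain ⟨d, hd, h⟩ := exists_den k (Finset.range m)
    (fun n => if h : n < m then a ⟨n, h⟩ else 0)
  have h' : ∀ i : Fin m, ∃ q : Polynomial k, (a i : LaurentSeries k) * d =
      Polynomial.aeval (HahnSeries.single (1 : ℤ) (1 : k) : LaurentSeries k) q := by
    intro i
    have := h i (Finset.mem_range.2 i.2)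
    simpa using this
  choose q hq using h'
  have hsum : ∑ i, (a i : LaurentSeries k) * d * laurentInclusion k₀ k (v i) = 0 := by
    have h0 : ∑ i, (a i : LaurentSeries k) * laurentInclusion k₀ k (v i) = 0 := ha
    calc _ = d * ∑ i, (a i : LaurentSeries k) * laurentInclusion k₀ k (v i) := by
          rw [Finset.mul_sum]
          exact Finset.sum_congr rfl fun _ _ => by ring
      _ = 0 := by rw [h0, mul_zero]
  have hz : (a i : LaurentSeries k) * d = 0 := by
    let b := Module.Free.chooseBasis k₀ k
    ext n
    rw [HahnSeries.coeff_zero]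
    apply b.repr.injective
    ext j
    have h1 := congrArg (lcoord k₀ k (b.coord j)) hsum
    rw [map_sum, map_zero] at h1
    have h2 := hv (fun i => ⟨lcoord k₀ k (b.coord j) ((a i : LaurentSeries k) * d), by
      rw [hq]; exact lcoord_mem k₀ k _ _⟩) (by
        rw [← h1]
        exact Finset.sum_congr rfl fun i _ => (lcoord_mul k₀ k _ _ _).symm) i
    have h3 : (lcoord k₀ k (b.coord j) ((a i : LaurentSeries k) * d)).coeff n = 0 := by
      exact congrArg (fun z : ratFuncField k₀ => (z : LaurentSeries k₀).coeff n) h2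
    rw [lcoord_coeff] at h3
    simpa using h3
  exact Subtype.ext ((mul_eq_zero.1 hz).resolve_right hd)

theorem inclusion_mem (k₀ k : Type*) [Field k₀] [Field k] [Algebra k₀ k] (x : LaurentSeries k₀)
    (hx : x ∈ ratFuncField k₀) : laurentInclusion k₀ k x ∈ ratFuncField k := by
  have hpoly : ∀ p : Polynomial k₀, laurentInclusion k₀ k (Polynomial.aeval
      (HahnSeries.single (1 : ℤ) (1 : k₀) : LaurentSeries k₀) p) ∈ ratFuncField k := by
    intro p
    induction p using Polynomial.induction_on' with
    | add p q hp hq => rw [map_add, map_add]; exact add_mem hp hq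
    | monomial n a =>
      have h : laurentInclusion k₀ k (Polynomial.aeval
          (HahnSeries.single (1 : ℤ) (1 : k₀) : LaurentSeries k₀)
          (Polynomial.monomial n a)) = HahnSeries.single (n : ℤ) (algebraMap k₀ k a) := by
        rw [Polynomial.aeval_monomial, HahnSeries.single_pow, ← Algebra.smul_def]
        ext m
        rw [laurentInclusion_coeff]
        by_cases hm : m = n
        · subst hm; simp
        · simp [HahnSeries.coeff_single_of_ne, hm]
      rw [h]; exact single_mem k n _
  obtain ⟨r, t, hrt⟩ := (IntermediateField.mem_adjoin_simple_iff k₀ _).1 hx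
  rw [hrt, map_div₀]
  exact div_mem (hpoly r) (hpoly t)


theorem main_one (k₀ k : Type*) [Field k₀] [Field k] [Algebra k₀ k]
    (F : IntermediateField (ratFuncField k₀) (LaurentSeries k₀))
    (hg : IsGalois (ratFuncField k₀) F) (hf : FiniteDimensional (ratFuncField k₀) F)
    (L : IntermediateField (ratFuncField k) (LaurentSeries k))
    (hL : L = IntermediateField.adjoin (ratFuncField k)
      (laurentInclusion k₀ k '' (F : Set (LaurentSeries k₀)))) :
    IsGalois (ratFuncField k) L ∧ FiniteDimensional (ratFuncField k) L ∧
    ∃ e : (L ≃ₐ[ratFuncField k] L) ≃* (F ≃ₐ[ratFuncField k₀] F),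
      ∀ (σ : L ≃ₐ[ratFuncField k] L) (x : F) (hx : laurentInclusion k₀ k x ∈ L),
        laurentInclusion k₀ k (e σ x : F) = (σ ⟨laurentInclusion k₀ k x, hx⟩ : L) := by
  let ψ : ratFuncField k₀ →+* ratFuncField k :=
    ((laurentInclusion k₀ k).comp (algebraMap (ratFuncField k₀) (LaurentSeries k₀))).codRestrict
      (ratFuncField k).toSubfield (fun x => inclusion_mem k₀ k x x.2)
  let i1 : Algebra (ratFuncField k₀) (ratFuncField k) := ψ.toAlgebra
  let i2 : Algebra (ratFuncField k₀) (LaurentSeries k) :=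
    ((laurentInclusion k₀ k).comp
      (algebraMap (ratFuncField k₀) (LaurentSeries k₀))).toAlgebra
  let i3 : Algebra F (LaurentSeries k) :=
    ((laurentInclusion k₀ k).comp (algebraMap F (LaurentSeries k₀))).toAlgebra
  have t1 : IsScalarTower (ratFuncField k₀) F (LaurentSeries k) :=
    IsScalarTower.of_algebraMap_eq fun x => rfl
  have t2 : IsScalarTower (ratFuncField k₀) (ratFuncField k) (LaurentSeries k) :=
    IsScalarTower.of_algebraMap_eq fun x => rfl
  have hL' : L = IntermediateField.adjoin (ratFuncField k)
      (Set.range (algebraMap F (LaurentSeries k))) := by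
    rw [hL]
    congr 1
    ext y
    constructor
    · rintro ⟨x, hx, rfl⟩
      exact ⟨⟨x, hx⟩, rfl⟩
    · rintro ⟨x, rfl⟩
      exact ⟨x, x.2, rfl⟩
  have hli : ∀ (m : ℕ) (v : Fin m → F), LinearIndependent (ratFuncField k₀) v →
      LinearIndependent (ratFuncField k) (fun i => algebraMap F (LaurentSeries k) (v i)) := by
    intro m v hv
    exact li_inclusion k₀ k m (fun i => (v i : LaurentSeries k₀))
      (hv.map' F.val.toLinearMap (LinearMap.ker_eq_bot.2 Subtype.val_injective))
  obtain ⟨h1, h2⟩ := aux_galois (ratFuncField k₀) F (ratFuncField k) (LaurentSeries k) L hL'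
  obtain ⟨e, he⟩ := aux_iso (ratFuncField k₀) F (ratFuncField k) (LaurentSeries k) hli L hL'
  exact ⟨h1, h2, e, he⟩

/-- Let `k₀ ⊆ k` be fields and `(Gₙ, sₙ)` a complete system of finite
groups.  Suppose there is an increasing tower `(Fₙ)` of intermediate fields of
`k₀((t))/k₀(t)`, each finite Galois over `k₀(t)`, with isomorphisms `Gₙ ≃* Gal(Fₙ/k₀(t))`
compatible with the `sₙ` and the restriction maps.  Then the composita `Lₙ = Fₙ·k`, taken
inside `k((t))` (via `k₀((t)) ⊆ k((t))`), form an increasing tower of intermediate fields of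
`k((t))/k(t)`, each finite Galois over `k(t)`, with isomorphisms `Gₙ ≃* Gal(Lₙ/k(t))`
compatible with the `sₙ` and the restriction maps. -/
theorem stmt10 (k₀ k : Type*) [Field k₀] [Field k] [Algebra k₀ k]
    (G : ℕ → Type*) [∀ n, Group (G n)] [∀ n, Finite (G n)]
    (s : ∀ n, G (n + 1) →* G n) (hs : ∀ n, Function.Surjective (s n))
    (F : ℕ → IntermediateField (ratFuncField k₀) (LaurentSeries k₀))
    (hFmono : Monotone F)
    (hFgal : ∀ n, IsGalois (ratFuncField k₀) (F n))
    (hFfin : ∀ n, FiniteDimensional (ratFuncField k₀) (F n))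
    (εF : ∀ n, G n ≃* ((F n) ≃ₐ[ratFuncField k₀] (F n)))
    (hεF : ∀ (n : ℕ) (g : G (n + 1)) (x : LaurentSeries k₀) (hx : x ∈ F n),
      ((εF n (s n g) ⟨x, hx⟩ : F n) : LaurentSeries k₀)
        = ((εF (n + 1) g ⟨x, hFmono (Nat.le_succ n) hx⟩ : F (n + 1)) : LaurentSeries k₀)) :
    ∃ hmono : Monotone (fun n => IntermediateField.adjoin (ratFuncField k)
        (laurentInclusion k₀ k '' (F n : Set (LaurentSeries k₀))) :
          ℕ → IntermediateField (ratFuncField k) (LaurentSeries k)),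
      (∀ n, IsGalois (ratFuncField k) (IntermediateField.adjoin (ratFuncField k)
        (laurentInclusion k₀ k '' (F n : Set (LaurentSeries k₀))))) ∧
      (∀ n, FiniteDimensional (ratFuncField k) (IntermediateField.adjoin (ratFuncField k)
        (laurentInclusion k₀ k '' (F n : Set (LaurentSeries k₀))))) ∧
      ∃ ε : ∀ n, G n ≃* ((IntermediateField.adjoin (ratFuncField k)
          (laurentInclusion k₀ k '' (F n : Set (LaurentSeries k₀))))
            ≃ₐ[ratFuncField k]
          (IntermediateField.adjoin (ratFuncField k)
            (laurentInclusion k₀ k '' (F n : Set (LaurentSeries k₀))))),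
        ∀ (n : ℕ) (g : G (n + 1)) (x : LaurentSeries k)
          (hx : x ∈ IntermediateField.adjoin (ratFuncField k)
            (laurentInclusion k₀ k '' (F n : Set (LaurentSeries k₀)))),
          ((ε n (s n g) ⟨x, hx⟩ :
              IntermediateField.adjoin (ratFuncField k)
                (laurentInclusion k₀ k '' (F n : Set (LaurentSeries k₀)))) : LaurentSeries k)
            = ((ε (n + 1) g ⟨x, hmono (Nat.le_succ n) hx⟩ :
              IntermediateField.adjoin (ratFuncField k)
                (laurentInclusion k₀ k '' (F (n + 1) : Set (LaurentSeries k₀)))) :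
                  LaurentSeries k) := by
  have H := fun n => main_one k₀ k (F n) (hFgal n) (hFfin n) _ rfl
  have hmono : Monotone (fun n => IntermediateField.adjoin (ratFuncField k)
        (laurentInclusion k₀ k '' (F n : Set (LaurentSeries k₀))) :
          ℕ → IntermediateField (ratFuncField k) (LaurentSeries k)) := fun a b hab =>
    IntermediateField.adjoin.mono _ _ _ (Set.image_mono (hFmono hab))
  choose h1 h2 e he using H
  refine ⟨hmono, h1, h2, fun n => (εF n).trans (e n).symm, ?_⟩
  intro n g x hx
  have he' : ∀ (n : ℕ) (g : G n) (y : LaurentSeries k₀) (hy : y ∈ F n)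
      (hx : laurentInclusion k₀ k y ∈ IntermediateField.adjoin (ratFuncField k)
        (laurentInclusion k₀ k '' (F n : Set (LaurentSeries k₀)))),
      (((((εF n).trans (e n).symm) g) ⟨laurentInclusion k₀ k y, hx⟩ :
        IntermediateField.adjoin (ratFuncField k)
        (laurentInclusion k₀ k '' (F n : Set (LaurentSeries k₀)))) : LaurentSeries k) =
        laurentInclusion k₀ k (εF n g ⟨y, hy⟩ : F n) := by
    intro n g y hy hx
    have := he n ((e n).symm (εF n g)) ⟨y, hy⟩ hx
    rw [MulEquiv.apply_symm_apply] at this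
    exact this.symm
  have key : (IntermediateField.val _).comp
        (((εF n).trans (e n).symm) (s n g)).toAlgHom =
      ((IntermediateField.val _).comp
        (((εF (n + 1)).trans (e (n + 1)).symm) g).toAlgHom).comp
        (IntermediateField.inclusion (hmono (Nat.le_succ n))) := by
    apply IntermediateField.algHom_ext_of_eq_adjoin _ rfl
    rintro _ ⟨y, hy, rfl⟩
    refine (he' n (s n g) y hy _).trans ?_
    rw [hεF n g y hy]
    exact (he' (n + 1) g y (hFmono (Nat.le_succ n) hy) _).symm
  exact congrArg (fun f => f ⟨x, hx⟩) key
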